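/- For every x ∈ U, the first derivative of the squared mean curvature at t = 0 is ∂(H(t)²)/∂t |_{t=0} = −2 (f(x) + φ'(0)) − (2/n) Δf(x). -/

import Mathlib

open MeasureTheory Real Set
open scoped RealInnerProductSpace

noncomputable section

abbrev En (n : ℕ) : Type := EuclideanSpace ℝ (Fin n)

/-- Partial derivative of `F` in the `i`-th coordinate direction. -/
def pd {m : ℕ} {E : Type} [NormedAddCommGroup E] [NormedSpace ℝ E]
    (i : Fin m) (F : En m → E) (x : En m) : E :=
  fderiv ℝ F x (EuclideanSpace.single i 1)

/-- The induced (first fundamental form) metric of a map `Y : U → ℝ^{n+1}`. -/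
def gmet {n : ℕ} (Y : En n → En (n + 1)) (x : En n) : Matrix (Fin n) (Fin n) ℝ :=
  Matrix.of fun i j => ⟪pd i Y x, pd j Y x⟫

/-- The variation `X(t,x) = (1 + t f(x) + φ(t)) Φ(x)`. -/
def Xvar {n : ℕ} (f : En n → ℝ) (φ : ℝ → ℝ) (Φ : En n → En (n + 1)) (t : ℝ) (x : En n) :
    En (n + 1) :=
  (1 + t * f x + φ t) • Φ x

/-- Second fundamental form `h_{ij} = ⟨∂X/∂x_i, ∂N/∂x_j⟩`. -/
def sff {n : ℕ} (Y Nf : En n → En (n + 1)) (x : En n) : Matrix (Fin n) (Fin n) ℝ :=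
  Matrix.of fun i j => ⟪pd i Y x, pd j Nf x⟫

/-- Mean curvature `H = (1/n) Σ g^{ij} h_{ij}`. -/
def Hmean {n : ℕ} (Y Nf : En n → En (n + 1)) (x : En n) : ℝ :=
  (1 / (n : ℝ)) * ∑ i, ∑ j, (gmet Y x)⁻¹ i j * sff Y Nf x i j

/-- The volume element `√(det g)`. -/
def vElem {n : ℕ} (Y : En n → En (n + 1)) (x : En n) : ℝ :=
  Real.sqrt (gmet Y x).det

/-- `|∇u|² = Σ g^{ij} ∂_i u ∂_j u` with respect to the metric of `Φ`. -/
def gradSq {n : ℕ} (Φ : En n → En (n + 1)) (u : En n → ℝ) (x : En n) : ℝ :=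
  ∑ i, ∑ j, (gmet Φ x)⁻¹ i j * pd i u x * pd j u x

/-- Tangential gradient `∇u = Σ g^{ij} ∂_i u ∂_j Φ ∈ ℝ^{n+1}`. -/
def gradV {n : ℕ} (Φ : En n → En (n + 1)) (u : En n → ℝ) (x : En n) : En (n + 1) :=
  ∑ i, ∑ j, ((gmet Φ x)⁻¹ i j * pd i u x) • pd j Φ x

/-- Laplace–Beltrami operator `Δu = (1/√g) Σ ∂_i (√g g^{ij} ∂_j u)`. -/
def lapl {n : ℕ} (Φ : En n → En (n + 1)) (u : En n → ℝ) (x : En n) : ℝ :=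
  (vElem Φ x)⁻¹ * ∑ i, ∑ j, pd i (fun y => vElem Φ y * (gmet Φ y)⁻¹ i j * pd j u y) x

/-- Christoffel symbols of the metric of `Φ`. -/
def christoffel {n : ℕ} (Φ : En n → En (n + 1)) (k i j : Fin n) (x : En n) : ℝ :=
  (1 / 2) * ∑ l, (gmet Φ x)⁻¹ k l *
    (pd i (fun y => gmet Φ y l j) x + pd j (fun y => gmet Φ y l i) x
      - pd l (fun y => gmet Φ y i j) x)

/-- Hessian `(∇²u)_{ij} = ∂²u/∂x_i∂x_j − Σ_k Γ^k_{ij} ∂_k u`. -/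
def hess {n : ℕ} (Φ : En n → En (n + 1)) (u : En n → ℝ) (x : En n) (i j : Fin n) : ℝ :=
  pd i (fun y => pd j u y) x - ∑ k, christoffel Φ k i j x * pd k u x

/-!
The mean curvature is `H = (1/n) div_X N`, where `div_X V = ∑ g^{ij} ⟨∂_i X, ∂_j V⟩`. At `t = 0` the
metric varies conformally, `g' = 2 (f + φ'(0)) g`, and the unit normal varies by `N' = -∇f`. Since
`N = X = Φ` at `t = 0`, the product rule gives `n H' = -n (f + φ'(0)) - div_Φ ∇f`. Jacobi's
formula, applied to `√(det g)`, identifies `div_Φ ∇f` with `Δf`, and `(H²)' = 2 H'` because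
`H = 1` at `t = 0`.
-/

open scoped Topology Matrix

section MatrixCalculus

variable {ι : Type*} [Fintype ι] [DecidableEq ι]

theorem sum_det_updateRow {R : Type*} [CommRing R] (A B : Matrix ι ι R) :
    ∑ i, (A.updateRow i (B i)).det = (A.adjugate * B).trace := by
  rw [Matrix.trace_mul_comm]
  refine Finset.sum_congr rfl fun i _ => ?_
  rw [← Matrix.cramer_transpose_apply, Matrix.cramer_eq_adjugate_mulVec,
    ← Matrix.adjugate_transpose, Matrix.mulVec_transpose]
  rfl

theorem det_smul_inv_eq_adjugate {K : Type*} [Field K] {A : Matrix ι ι K} (hA : A.det ≠ 0) :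
    A.det • A⁻¹ = A.adjugate := by
  rw [Matrix.inv_def, Ring.inverse_eq_inv', smul_inv_smul₀ hA]

variable {𝕜 E : Type*} [NontriviallyNormedField 𝕜] [CompleteSpace 𝕜] [NormedAddCommGroup E]
  [NormedSpace 𝕜 E]

/-- Jacobi's formula: the determinant is multilinear in the rows, so its derivative replaces one row
at a time, and cofactor expansion along that row produces the adjugate. -/
theorem hasFDerivAt_det (A : Matrix ι ι 𝕜) :
    HasFDerivAt Matrix.det
      (Matrix.traceLinearMap ι 𝕜 𝕜 ∘ₗ LinearMap.mulLeft 𝕜 A.adjugate).toContinuousLinearMap A := by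
  let det : ContinuousMultilinearMap 𝕜 (fun _ : ι => ι → 𝕜) 𝕜 :=
    ⟨Matrix.detRowAlternating.toMultilinearMap, Continuous.matrix_det continuous_id⟩
  exact (det.hasFDerivAt A).congr_fderiv <| ContinuousLinearMap.ext fun B =>
    (det.linearDeriv_apply A B).trans (sum_det_updateRow A B)

open scoped Matrix.Norms.Operator in
theorem hasFDerivAt_matrix_inv {A : Matrix ι ι 𝕜} (hA : A.det ≠ 0) :
    HasFDerivAt (fun B : Matrix ι ι 𝕜 => B⁻¹)
      (-ContinuousLinearMap.mulLeftRight 𝕜 (Matrix ι ι 𝕜) A⁻¹ A⁻¹) A := by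
  -- The uniformity of the operator norm is the entrywise one, though not reducibly so.
  have : @CompleteSpace (Matrix ι ι 𝕜) PseudoMetricSpace.toUniformSpace :=
    inferInstanceAs (CompleteSpace (ι → ι → 𝕜))
  rw [show (fun B : Matrix ι ι 𝕜 => B⁻¹) = Ring.inverse from
    funext Matrix.nonsing_inv_eq_ringInverse]
  exact hasFDerivAt_ringInverse (A.nonsingInvUnit hA.isUnit)

open scoped Matrix.Norms.Operator in
theorem hasDerivAt_matrix_inv {M : 𝕜 → Matrix ι ι 𝕜} {M' : Matrix ι ι 𝕜} {t : 𝕜}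
    (hM : HasDerivAt M M' t) (hdet : (M t).det ≠ 0) :
    HasDerivAt (fun s => (M s)⁻¹) (-((M t)⁻¹ * M' * (M t)⁻¹)) t :=
  (hasFDerivAt_matrix_inv hdet).comp_hasDerivAt t hM

open scoped Matrix.Norms.Operator in
theorem differentiableAt_matrix_inv_apply {M : E → Matrix ι ι 𝕜} {x : E}
    (hM : DifferentiableAt 𝕜 M x) (hdet : (M x).det ≠ 0) (i j : ι) :
    DifferentiableAt 𝕜 (fun y => (M y)⁻¹ i j) x :=
  have hinv := (hasFDerivAt_matrix_inv hdet).differentiableAt.comp x hM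
  differentiableAt_pi.1 (differentiableAt_pi.1 hinv i) j

open scoped Matrix.Norms.Operator in
theorem differentiableAt_det {M : E → Matrix ι ι 𝕜} {x : E} (hM : DifferentiableAt 𝕜 M x) :
    DifferentiableAt 𝕜 (fun y => (M y).det) x :=
  (hasFDerivAt_det (M x)).differentiableAt.comp x hM

open scoped Matrix.Norms.Operator in
theorem fderiv_det_apply {M : E → Matrix ι ι 𝕜} {x : E} (hM : DifferentiableAt 𝕜 M x) (v : E) :
    fderiv 𝕜 (fun y => (M y).det) x v = ((M x).adjugate * fderiv 𝕜 M x v).trace :=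
  DFunLike.congr_fun ((hasFDerivAt_det (M x)).comp x hM.hasFDerivAt).fderiv v

end MatrixCalculus

section MixedDerivatives

variable {E F G : Type*} [NormedAddCommGroup E] [NormedSpace ℝ E] [NormedAddCommGroup F]
  [NormedSpace ℝ F] [NormedAddCommGroup G] [NormedSpace ℝ G]

theorem differentiableAt_fderiv {u : E → F} {x : E} (hu : ContDiffAt ℝ 2 u x) :
    DifferentiableAt ℝ (fderiv ℝ u) x :=
  (hu.fderiv_right (m := 1) (by norm_num)).differentiableAt one_ne_zero

theorem differentiableAt_fderiv_apply {u : E → F} {x : E} (hu : ContDiffAt ℝ 2 u x) (v : E) :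
    DifferentiableAt ℝ (fun y => fderiv ℝ u y v) x :=
  (differentiableAt_fderiv hu).clm_apply (differentiableAt_const v)

theorem fderiv_fderiv_apply_comm {u : E → F} {x : E} (hu : ContDiffAt ℝ 2 u x) (v w : E) :
    fderiv ℝ (fun y => fderiv ℝ u y v) x w = fderiv ℝ (fun y => fderiv ℝ u y w) x v := by
  have hsecond (a b : E) :
      fderiv ℝ (fun y => fderiv ℝ u y a) x b = fderiv ℝ (fderiv ℝ u) x b a := by
    rw [fderiv_clm_apply (differentiableAt_fderiv hu) (differentiableAt_const a)]
    simp
  rw [hsecond, hsecond]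
  exact hu.isSymmSndFDerivAt (by simp) w v

theorem fderiv_curry_right_apply {u : G × E → F} {t : G} {x : E}
    (hu : DifferentiableAt ℝ u (t, x)) (v : E) :
    fderiv ℝ (fun y => u (t, y)) x v = fderiv ℝ u (t, x) (0, v) :=
  DFunLike.congr_fun (hu.hasFDerivAt.comp x (hasFDerivAt_prodMk_right t x)).fderiv v

theorem hasDerivAt_curry_left {u : ℝ × E → F} {t : ℝ} {x : E}
    (hu : DifferentiableAt ℝ u (t, x)) :
    HasDerivAt (fun s => u (s, x)) (fderiv ℝ u (t, x) (1, 0)) t :=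
  hu.hasFDerivAt.comp_hasDerivAt t ((hasDerivAt_id t).prodMk (hasDerivAt_const t x))

theorem hasDerivAt_fderiv_curry {u : ℝ × E → F} {t : ℝ} {x : E}
    (hu : ContDiffAt ℝ 2 u (t, x)) (v : E) :
    HasDerivAt (fun s => fderiv ℝ (fun y => u (s, y)) x v)
      (fderiv ℝ (fun y => deriv (fun s => u (s, y)) t) x v) t := by
  have hdiff : ∀ᶠ p in 𝓝 (t, x), DifferentiableAt ℝ u p :=
    (hu.eventually (by simp)).mono fun p hp => hp.differentiableAt two_ne_zero
  have hspace : (fun s => fderiv ℝ (fun y => u (s, y)) x v) =ᶠ[𝓝 t]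
      fun s => fderiv ℝ u (s, x) (0, v) :=
    ((Continuous.prodMk_left x).continuousAt.eventually hdiff).mono fun s hs =>
      fderiv_curry_right_apply hs v
  have htime : (fun y => deriv (fun s => u (s, y)) t) =ᶠ[𝓝 x]
      fun y => fderiv ℝ u (t, y) (1, 0) :=
    ((Continuous.prodMk_right t).continuousAt.eventually hdiff).mono fun y hy =>
      (hasDerivAt_curry_left hy).deriv
  have hcomm : fderiv ℝ (fun y => deriv (fun s => u (s, y)) t) x v =
      fderiv ℝ (fun p => fderiv ℝ u p (0, v)) (t, x) (1, 0) := by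
    rw [htime.fderiv_eq,
      fderiv_curry_right_apply (differentiableAt_fderiv_apply hu (1, 0)),
      fderiv_fderiv_apply_comm hu]
  rw [hcomm]
  exact (hasDerivAt_curry_left (differentiableAt_fderiv_apply hu (0, v))).congr_of_eventuallyEq
    hspace

end MixedDerivatives

section PartialDerivatives

variable {m : ℕ} {E : Type} [NormedAddCommGroup E] [NormedSpace ℝ E] {F : En m → E}
  {u : En m → ℝ} {x : En m}

theorem differentiableAt_pd (hF : ContDiffAt ℝ 2 F x) (i : Fin m) :
    DifferentiableAt ℝ (pd i F) x :=
  differentiableAt_fderiv_apply hF _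

theorem pd_comm (hF : ContDiffAt ℝ 2 F x) (i j : Fin m) : pd i (pd j F) x = pd j (pd i F) x :=
  fderiv_fderiv_apply_comm hF _ _

theorem pd_congr {G : En m → E} (h : F =ᶠ[𝓝 x] G) (i : Fin m) : pd i F x = pd i G x := by
  rw [pd, h.fderiv_eq, pd]

theorem pd_neg (i : Fin m) : pd i (fun y => -F y) x = -pd i F x := by
  simp [pd, fderiv_fun_neg]

theorem pd_mul {v : En m → ℝ} (hu : DifferentiableAt ℝ u x) (hv : DifferentiableAt ℝ v x)
    (i : Fin m) : pd i (fun y => u y * v y) x = u x * pd i v x + v x * pd i u x := by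
  simp [pd, fderiv_fun_mul hu hv]

theorem pd_smul (hu : DifferentiableAt ℝ u x) (hF : DifferentiableAt ℝ F x) (i : Fin m) :
    pd i (fun y => u y • F y) x = u x • pd i F x + pd i u x • F x := by
  simp [pd, fderiv_fun_smul hu hF]

theorem pd_sum {κ : Type*} {s : Finset κ} {F : κ → En m → E}
    (hF : ∀ k ∈ s, DifferentiableAt ℝ (F k) x) (i : Fin m) :
    pd i (fun y => ∑ k ∈ s, F k y) x = ∑ k ∈ s, pd i (F k) x := by
  simp [pd, fderiv_fun_sum hF]

end PartialDerivatives

section Divergence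

variable {n : ℕ} {Φ V W : En n → En (n + 1)} {u : En n → ℝ} {x : En n}

/-- The divergence `∑ g^{ij} ⟨∂_i Φ, ∂_j V⟩` along the hypersurface `Φ` of a vector field `V` of the
ambient space, which need not be tangent to `Φ`. -/
def surfDiv (Φ V : En n → En (n + 1)) (x : En n) : ℝ :=
  ∑ i, ∑ j, (gmet Φ x)⁻¹ i j * sff Φ V x i j

theorem gmet_apply_comm (i j : Fin n) : gmet Φ x i j = gmet Φ x j i :=
  real_inner_comm (pd j Φ x) (pd i Φ x)

theorem gmet_inv_apply_comm (i j : Fin n) : (gmet Φ x)⁻¹ i j = (gmet Φ x)⁻¹ j i :=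
  have hsymm : (gmet Φ x).IsSymm := Matrix.IsSymm.ext fun i j => gmet_apply_comm j i
  hsymm.inv.apply j i

theorem sum_gmet_inv_mul_gmet (hdet : (gmet Φ x).det ≠ 0) (i k : Fin n) :
    ∑ j, (gmet Φ x)⁻¹ i j * gmet Φ x j k = if i = k then 1 else 0 := by
  rw [← Matrix.mul_apply, Matrix.nonsing_inv_mul _ hdet.isUnit, Matrix.one_apply]

theorem surfDiv_self (hdet : (gmet Φ x).det ≠ 0) : surfDiv Φ Φ x = n := by
  have hrow (i : Fin n) : ∑ j, (gmet Φ x)⁻¹ i j * gmet Φ x i j = 1 := by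
    simpa only [gmet_apply_comm (Φ := Φ) _ i, if_true] using sum_gmet_inv_mul_gmet hdet i i
  calc surfDiv Φ Φ x = ∑ i, ∑ j, (gmet Φ x)⁻¹ i j * gmet Φ x i j := rfl
    _ = n := by simp [hrow]

theorem Hmean_eq_surfDiv (Y N : En n → En (n + 1)) (x : En n) :
    Hmean Y N x = 1 / (n : ℝ) * surfDiv Y N x :=
  rfl

theorem Hmean_self (hn : n ≠ 0) (hdet : (gmet Φ x).det ≠ 0) : Hmean Φ Φ x = 1 := by
  rw [Hmean_eq_surfDiv, surfDiv_self hdet, one_div_mul_cancel (Nat.cast_ne_zero.2 hn)]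

theorem surfDiv_eq_trace (Φ V : En n → En (n + 1)) (x : En n) :
    surfDiv Φ V x = ((gmet Φ x)⁻¹ * (sff Φ V x)ᵀ).trace := by
  simp [surfDiv, Matrix.trace, Matrix.mul_apply]

theorem surfDiv_congr (h : V =ᶠ[𝓝 x] W) :
    surfDiv Φ V x = surfDiv Φ W x := by
  simp only [surfDiv, sff, Matrix.of_apply, pd_congr h]

theorem surfDiv_neg :
    surfDiv Φ (fun y => -V y) x = -surfDiv Φ V x := by
  simp [surfDiv, sff, pd_neg]

theorem surfDiv_smul (hu : DifferentiableAt ℝ u x) (hW : DifferentiableAt ℝ W x) :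
    surfDiv Φ (fun y => u y • W y) x =
      u x * surfDiv Φ W x + ∑ i, ∑ j, (gmet Φ x)⁻¹ i j * ⟪pd i Φ x, W x⟫ * pd j u x := by
  simp only [surfDiv, sff, Matrix.of_apply, pd_smul hu hW, inner_add_right, real_inner_smul_right,
    Finset.mul_sum, ← Finset.sum_add_distrib]
  exact Finset.sum_congr rfl fun i _ => Finset.sum_congr rfl fun j _ => by ring

theorem surfDiv_smul_pd (hΦ : ContDiffAt ℝ 2 Φ x) (hdet : (gmet Φ x).det ≠ 0)
    (hu : DifferentiableAt ℝ u x) (k : Fin n) :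
    surfDiv Φ (fun y => u y • pd k Φ y) x = u x * surfDiv Φ (pd k Φ) x + pd k u x := by
  have hcol (j : Fin n) :
      ∑ i, (gmet Φ x)⁻¹ i j * ⟪pd i Φ x, pd k Φ x⟫ = if j = k then 1 else 0 := by
    simp only [gmet_inv_apply_comm _ j]
    exact sum_gmet_inv_mul_gmet hdet j k
  rw [surfDiv_smul hu (differentiableAt_pd hΦ k), Finset.sum_comm]
  simp [← Finset.sum_mul, hcol]

theorem surfDiv_sum {κ : Type*} {s : Finset κ} {V : κ → En n → En (n + 1)}
    (hV : ∀ k ∈ s, DifferentiableAt ℝ (V k) x) :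
    surfDiv Φ (fun y => ∑ k ∈ s, V k y) x = ∑ k ∈ s, surfDiv Φ (V k) x := by
  simp only [surfDiv, sff, Matrix.of_apply, pd_sum hV, inner_sum, Finset.mul_sum]
  exact (Finset.sum_congr rfl fun i _ => Finset.sum_comm).trans Finset.sum_comm

theorem differentiableAt_gmet (hΦ : ContDiffAt ℝ 2 Φ x) : DifferentiableAt ℝ (gmet Φ) x :=
  differentiableAt_pi.2 fun i => differentiableAt_pi.2 fun j =>
    (differentiableAt_pd hΦ i).inner ℝ (differentiableAt_pd hΦ j)

theorem fderiv_gmet_single (hΦ : ContDiffAt ℝ 2 Φ x) (k : Fin n) :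
    fderiv ℝ (gmet Φ) x (EuclideanSpace.single k 1) =
      sff Φ (pd k Φ) x + (sff Φ (pd k Φ) x)ᵀ := by
  ext i j
  have hentry := hasFDerivAt_pi'.1 (hasFDerivAt_pi'.1 (differentiableAt_gmet hΦ).hasFDerivAt i) j
  calc fderiv ℝ (gmet Φ) x (EuclideanSpace.single k 1) i j
      = pd k (fun y => ⟪pd i Φ y, pd j Φ y⟫) x := (DFunLike.congr_fun hentry.fderiv _).symm
    _ = ⟪pd i Φ x, pd k (pd j Φ) x⟫ + ⟪pd k (pd i Φ) x, pd j Φ x⟫ :=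
      fderiv_inner_apply ℝ (differentiableAt_pd hΦ i) (differentiableAt_pd hΦ j) _
    _ = ⟪pd i Φ x, pd j (pd k Φ) x⟫ + ⟪pd j Φ x, pd i (pd k Φ) x⟫ := by
      rw [pd_comm hΦ k j, pd_comm hΦ k i, real_inner_comm (pd j Φ x)]

theorem pd_det_gmet (hΦ : ContDiffAt ℝ 2 Φ x) (hdet : (gmet Φ x).det ≠ 0) (k : Fin n) :
    pd k (fun y => (gmet Φ y).det) x = 2 * (gmet Φ x).det * surfDiv Φ (pd k Φ) x := by
  have hsymm : ((gmet Φ x)⁻¹ * sff Φ (pd k Φ) x).trace = surfDiv Φ (pd k Φ) x := by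
    have hinv : (gmet Φ x)⁻¹ᵀ = (gmet Φ x)⁻¹ :=
      Matrix.ext fun i j => gmet_inv_apply_comm j i
    rw [surfDiv_eq_trace, ← Matrix.trace_transpose, Matrix.transpose_mul, hinv,
      Matrix.trace_mul_comm]
  rw [pd, fderiv_det_apply (differentiableAt_gmet hΦ), fderiv_gmet_single hΦ,
    ← det_smul_inv_eq_adjugate hdet, Matrix.smul_mul, Matrix.trace_smul, Matrix.mul_add,
    Matrix.trace_add, hsymm, ← surfDiv_eq_trace, smul_eq_mul]
  ring

theorem hasFDerivAt_vElem (hΦ : ContDiffAt ℝ 2 Φ x) (hdet : 0 < (gmet Φ x).det) :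
    HasFDerivAt (vElem Φ) ((1 / (2 * vElem Φ x)) • fderiv ℝ (fun y => (gmet Φ y).det) x) x :=
  (differentiableAt_det (differentiableAt_gmet hΦ)).hasFDerivAt.sqrt hdet.ne'

theorem pd_vElem (hΦ : ContDiffAt ℝ 2 Φ x) (hdet : 0 < (gmet Φ x).det) (k : Fin n) :
    pd k (vElem Φ) x = vElem Φ x * surfDiv Φ (pd k Φ) x := by
  have hv : 0 < vElem Φ x := Real.sqrt_pos.2 hdet
  have hsq : (gmet Φ x).det = vElem Φ x * vElem Φ x := (Real.mul_self_sqrt hdet.le).symm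
  calc pd k (vElem Φ) x = 1 / (2 * vElem Φ x) * pd k (fun y => (gmet Φ y).det) x :=
      DFunLike.congr_fun (hasFDerivAt_vElem hΦ hdet).fderiv _
    _ = vElem Φ x * surfDiv Φ (pd k Φ) x := by
      rw [pd_det_gmet hΦ hdet.ne', hsq]
      field_simp

theorem pd_vElem_mul (hΦ : ContDiffAt ℝ 2 Φ x) (hdet : 0 < (gmet Φ x).det)
    (hu : DifferentiableAt ℝ u x) (k : Fin n) :
    pd k (fun y => vElem Φ y * u y) x =
      vElem Φ x * surfDiv Φ (fun y => u y • pd k Φ y) x := by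
  rw [pd_mul (hasFDerivAt_vElem hΦ hdet).differentiableAt hu, pd_vElem hΦ hdet,
    surfDiv_smul_pd hΦ hdet.ne' hu]
  ring

theorem lapl_eq_surfDiv_gradV (hΦ : ContDiffAt ℝ 2 Φ x) (hu : ContDiffAt ℝ 2 u x)
    (hdet : 0 < (gmet Φ x).det) : lapl Φ u x = surfDiv Φ (gradV Φ u) x := by
  have hcoef (i j : Fin n) : DifferentiableAt ℝ (fun y => (gmet Φ y)⁻¹ i j * pd j u y) x :=
    (differentiableAt_matrix_inv_apply (differentiableAt_gmet hΦ) hdet.ne' i j).mul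
      (differentiableAt_pd hu j)
  have hfield (i j : Fin n) :
      DifferentiableAt ℝ (fun y => ((gmet Φ y)⁻¹ i j * pd j u y) • pd i Φ y) x :=
    (hcoef i j).smul (differentiableAt_pd hΦ i)
  have hgrad : gradV Φ u = fun y => ∑ i, ∑ j, ((gmet Φ y)⁻¹ i j * pd j u y) • pd i Φ y := by
    funext y
    rw [gradV, Finset.sum_comm]
    simp only [gmet_inv_apply_comm]
  rw [lapl, hgrad, surfDiv_sum fun i _ => .fun_sum fun j _ => hfield i j]
  simp only [surfDiv_sum fun j _ => hfield _ j, mul_assoc, pd_vElem_mul hΦ hdet (hcoef _ _),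
    ← Finset.mul_sum]
  exact inv_mul_cancel_left₀ (Real.sqrt_pos.2 hdet).ne' _

end Divergence

section Orthogonality

theorem inner_fderiv_eq_zero_of_norm_eq_one {E G : Type*} [NormedAddCommGroup E] [NormedSpace ℝ E]
    [NormedAddCommGroup G] [InnerProductSpace ℝ G] {F : E → G} {x : E}
    (hF : DifferentiableAt ℝ F x) (hunit : ∀ᶠ y in 𝓝 x, ‖F y‖ = 1) (v : E) :
    ⟪F x, fderiv ℝ F x v⟫ = 0 := by
  have hconst : (fun y => ⟪F y, F y⟫) =ᶠ[𝓝 x] fun _ => (1 : ℝ) :=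
    hunit.mono fun y hy => by simp [hy]
  have hderiv := fderiv_inner_apply ℝ hF hF v
  rw [hconst.fderiv_eq, fderiv_fun_const, real_inner_comm (F x)] at hderiv
  simpa using hderiv.symm

theorem eq_zero_of_inner_hyperplane_eq_zero {𝕜 E ι : Type*} [RCLike 𝕜] [NormedAddCommGroup E]
    [InnerProductSpace 𝕜 E] [FiniteDimensional 𝕜 E] [Fintype ι] {v : ι → E} {w a : E}
    (hv : LinearIndependent 𝕜 v) (hcard : Fintype.card ι + 1 = Module.finrank 𝕜 E) (hw : w ≠ 0)
    (hvw : ∀ i, inner 𝕜 (v i) w = 0) (hva : ∀ i, inner 𝕜 (v i) a = 0) (hwa : inner 𝕜 w a = 0) :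
    a = 0 := by
  set K := Submodule.span 𝕜 (Set.range v)
  have hmem {b : E} (hb : ∀ i, inner 𝕜 (v i) b = 0) : b ∈ Kᗮ :=
    have hortho : K ⟂ Submodule.span 𝕜 {b} :=
      Submodule.isOrtho_span.2 (by rintro _ ⟨i, rfl⟩ _ rfl; exact hb i)
    hortho.symm (Submodule.mem_span_singleton_self b)
  have hline : Module.finrank 𝕜 Kᗮ = 1 := by
    have hadd := K.finrank_add_finrank_orthogonal
    rw [finrank_span_eq_card hv, ← hcard] at hadd
    exact Nat.add_left_cancel hadd
  obtain ⟨c, hc⟩ := (finrank_eq_one_iff_of_nonzero' (⟨w, hmem hvw⟩ : Kᗮ)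
    (by simpa using hw)).1 hline ⟨a, hmem hva⟩
  have hac : c • w = a := congrArg Subtype.val hc
  rw [← hac, inner_smul_right, mul_eq_zero, inner_self_eq_zero] at hwa
  rw [← hac, hwa.resolve_right hw, zero_smul]

end Orthogonality

section Variation

variable {n : ℕ} {Φ : En n → En (n + 1)} {f : En n → ℝ} {φ : ℝ → ℝ} {x : En n}

theorem inner_gradV_pd (hdet : (gmet Φ x).det ≠ 0) (k : Fin n) :
    ⟪gradV Φ f x, pd k Φ x⟫ = pd k f x := by
  have hrow (i : Fin n) : ∑ j, (gmet Φ x)⁻¹ i j * ⟪pd j Φ x, pd k Φ x⟫ = if i = k then 1 else 0 :=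
    sum_gmet_inv_mul_gmet hdet i k
  simp only [gradV, sum_inner, real_inner_smul_left, mul_right_comm _ (pd _ f x),
    ← Finset.sum_mul, hrow]
  simp

theorem inner_gradV_eq_zero {w : En (n + 1)} (hw : ∀ i, ⟪w, pd i Φ x⟫ = 0) :
    ⟪w, gradV Φ f x⟫ = 0 := by
  simp [gradV, inner_sum, real_inner_smul_right, hw]

theorem pd_Xvar (hΦ : DifferentiableAt ℝ Φ x) (hf : DifferentiableAt ℝ f x) (t : ℝ) (i : Fin n) :
    pd i (Xvar f φ Φ t) x = (1 + t * f x + φ t) • pd i Φ x + (t * pd i f x) • Φ x := by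
  have hfactor : pd i (fun y => 1 + t * f y + φ t) x = t * pd i f x := by
    simp [pd, fderiv_const_mul hf]
  rw [← hfactor]
  exact pd_smul (by fun_prop) hΦ i

theorem Xvar_zero (hφ0 : φ 0 = 0) : Xvar f φ Φ 0 = Φ := by
  funext y
  simp [Xvar, hφ0]

theorem hasDerivAt_pd_Xvar (hΦ : DifferentiableAt ℝ Φ x) (hf : DifferentiableAt ℝ f x)
    (hφ : DifferentiableAt ℝ φ 0) (i : Fin n) :
    HasDerivAt (fun t => pd i (Xvar f φ Φ t) x)
      ((f x + deriv φ 0) • pd i Φ x + pd i f x • Φ x) 0 := by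
  have hscale : HasDerivAt (fun t => 1 + t * f x + φ t) (f x + deriv φ 0) 0 :=
    ((hasDerivAt_mul_const (f x)).const_add 1).fun_add hφ.hasDerivAt
  simp only [pd_Xvar hΦ hf]
  exact (hscale.smul_const _).fun_add ((hasDerivAt_mul_const (pd i f x)).smul_const _)

theorem deriv_normal_eq_neg_gradV {N : ℝ → En (n + 1)}
    (hΦ : DifferentiableAt ℝ Φ x) (hf : DifferentiableAt ℝ f x) (hφ : DifferentiableAt ℝ φ 0)
    (hφ0 : φ 0 = 0) (hpos : (gmet Φ x).PosDef) (hN : DifferentiableAt ℝ N 0)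
    (hunit : ∀ᶠ t in 𝓝 0, ‖N t‖ = 1)
    (horth : ∀ᶠ t in 𝓝 0, ∀ i, ⟪N t, pd i (Xvar f φ Φ t) x⟫ = 0) (hN0 : N 0 = Φ x) :
    deriv N 0 = -gradV Φ f x := by
  have hΦnorm : ‖Φ x‖ = 1 := hN0 ▸ hunit.self_of_nhds
  have hΦpd (i : Fin n) : ⟪Φ x, pd i Φ x⟫ = 0 := by
    simpa only [Xvar_zero hφ0, hN0] using horth.self_of_nhds i
  have hpd (i : Fin n) : ⟪deriv N 0, pd i Φ x⟫ = -pd i f x := by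
    have hproduct := hN.hasDerivAt.inner ℝ (hasDerivAt_pd_Xvar hΦ hf hφ i)
    have hzero := hproduct.unique
      ((hasDerivAt_const 0 (0 : ℝ)).congr_of_eventuallyEq (horth.mono fun t ht => ht i))
    simp only [Xvar_zero hφ0, hN0, inner_add_right, real_inner_smul_right, hΦpd,
      real_inner_self_eq_norm_sq, hΦnorm] at hzero
    linarith
  have hnormal : ⟪Φ x, deriv N 0⟫ = 0 := by
    simpa [hN0] using inner_fderiv_eq_zero_of_norm_eq_one hN hunit 1
  refine eq_neg_of_add_eq_zero_left <| eq_zero_of_inner_hyperplane_eq_zero (𝕜 := ℝ) (w := Φ x)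
    (Matrix.posDef_gram_iff_linearIndependent.1 hpos) (by simp)
    (norm_ne_zero_iff.1 (hΦnorm ▸ one_ne_zero)) (fun i => ?_) (fun i => ?_) ?_
  · rw [real_inner_comm, hΦpd]
  · rw [real_inner_comm, inner_add_left, hpd, inner_gradV_pd hpos.det_pos.ne', neg_add_cancel]
  · rw [inner_add_right, hnormal, inner_gradV_eq_zero hΦpd, add_zero]

theorem hasDerivAt_gmet_Xvar (hΦ : DifferentiableAt ℝ Φ x) (hf : DifferentiableAt ℝ f x)
    (hφ : DifferentiableAt ℝ φ 0) (hφ0 : φ 0 = 0) (hΦpd : ∀ i, ⟪Φ x, pd i Φ x⟫ = 0) :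
    HasDerivAt (fun t => gmet (Xvar f φ Φ t) x) ((2 * (f x + deriv φ 0)) • gmet Φ x) 0 := by
  refine hasDerivAt_pi.2 fun i => hasDerivAt_pi.2 fun j => ?_
  refine ((hasDerivAt_pd_Xvar hΦ hf hφ i).inner ℝ (hasDerivAt_pd_Xvar hΦ hf hφ j)).congr_deriv ?_
  simp only [Xvar_zero hφ0, inner_add_left, inner_add_right, real_inner_smul_left,
    real_inner_smul_right, hΦpd, real_inner_comm (Φ x), Matrix.smul_apply, gmet, Matrix.of_apply,
    smul_eq_mul]
  ring

theorem hasDerivAt_gmet_inv_Xvar (hΦ : DifferentiableAt ℝ Φ x) (hf : DifferentiableAt ℝ f x)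
    (hφ : DifferentiableAt ℝ φ 0) (hφ0 : φ 0 = 0) (hΦpd : ∀ i, ⟪Φ x, pd i Φ x⟫ = 0)
    (hdet : (gmet Φ x).det ≠ 0) :
    HasDerivAt (fun t => (gmet (Xvar f φ Φ t) x)⁻¹)
      (-(2 * (f x + deriv φ 0)) • (gmet Φ x)⁻¹) 0 := by
  have hinv := hasDerivAt_matrix_inv (hasDerivAt_gmet_Xvar hΦ hf hφ hφ0 hΦpd)
    (by rwa [Xvar_zero hφ0])
  rwa [Xvar_zero hφ0, Matrix.mul_smul, Matrix.smul_mul, Matrix.nonsing_inv_mul _ hdet.isUnit,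
    one_mul, ← neg_smul] at hinv

variable {N : ℝ → En n → En (n + 1)}

theorem hasDerivAt_sff_Xvar (hΦ : DifferentiableAt ℝ Φ x) (hf : DifferentiableAt ℝ f x)
    (hφ : DifferentiableAt ℝ φ 0) (hφ0 : φ 0 = 0) (hΦpd : ∀ i, ⟪Φ x, pd i Φ x⟫ = 0)
    (hN : ContDiffAt ℝ 2 (fun p : ℝ × En n => N p.1 p.2) (0, x)) (hN0 : N 0 =ᶠ[𝓝 x] Φ)
    (i j : Fin n) :
    HasDerivAt (fun t => sff (Xvar f φ Φ t) (N t) x i j)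
      ((f x + deriv φ 0) * gmet Φ x i j + sff Φ (fun y => deriv (fun t => N t y) 0) x i j) 0 := by
  have hNpd : HasDerivAt (fun t => pd j (N t) x) (pd j (fun y => deriv (fun t => N t y) 0) x) 0 :=
    hasDerivAt_fderiv_curry hN _
  refine ((hasDerivAt_pd_Xvar hΦ hf hφ i).inner ℝ hNpd).congr_deriv ?_
  rw [Xvar_zero hφ0, pd_congr hN0, inner_add_left, real_inner_smul_left, real_inner_smul_left,
    hΦpd, mul_zero, add_zero, add_comm]
  rfl

theorem hasDerivAt_surfDiv_Xvar (hΦ : DifferentiableAt ℝ Φ x) (hf : DifferentiableAt ℝ f x)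
    (hφ : DifferentiableAt ℝ φ 0) (hφ0 : φ 0 = 0) (hΦpd : ∀ i, ⟪Φ x, pd i Φ x⟫ = 0)
    (hdet : (gmet Φ x).det ≠ 0)
    (hN : ContDiffAt ℝ 2 (fun p : ℝ × En n => N p.1 p.2) (0, x)) (hN0 : N 0 =ᶠ[𝓝 x] Φ) :
    HasDerivAt (fun t => surfDiv (Xvar f φ Φ t) (N t) x)
      (surfDiv Φ (fun y => deriv (fun t => N t y) 0) x - n * (f x + deriv φ 0)) 0 := by
  have hinv := hasDerivAt_gmet_inv_Xvar hΦ hf hφ hφ0 hΦpd hdet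
  have hsff0 : sff Φ (N 0) x = gmet Φ x := by
    ext i j
    rw [sff, Matrix.of_apply, pd_congr hN0, gmet, Matrix.of_apply]
  refine (HasDerivAt.fun_sum fun i _ => HasDerivAt.fun_sum fun j _ =>
    (hasDerivAt_pi.1 (hasDerivAt_pi.1 hinv i) j).mul
      (hasDerivAt_sff_Xvar hΦ hf hφ hφ0 hΦpd hN hN0 i j)).congr_deriv ?_
  rw [Xvar_zero hφ0, hsff0, ← surfDiv_self hdet, surfDiv, surfDiv, Finset.sum_mul,
    ← Finset.sum_sub_distrib]
  refine Finset.sum_congr rfl fun i _ => ?_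
  rw [Finset.sum_mul, ← Finset.sum_sub_distrib]
  refine Finset.sum_congr rfl fun j _ => ?_
  rw [show sff Φ Φ x = gmet Φ x from rfl, Matrix.smul_apply, smul_eq_mul]
  ring

theorem hasDerivAt_Hmean_Xvar (hn : n ≠ 0) (hΦ : ContDiffAt ℝ 2 Φ x) (hf : ContDiffAt ℝ 2 f x)
    (hφ : DifferentiableAt ℝ φ 0) (hφ0 : φ 0 = 0) (hΦpd : ∀ i, ⟪Φ x, pd i Φ x⟫ = 0)
    (hdet : 0 < (gmet Φ x).det)
    (hN : ContDiffAt ℝ 2 (fun p : ℝ × En n => N p.1 p.2) (0, x)) (hN0 : N 0 =ᶠ[𝓝 x] Φ)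
    (hN' : (fun y => deriv (fun t => N t y) 0) =ᶠ[𝓝 x] fun y => -gradV Φ f y) :
    HasDerivAt (fun t => Hmean (Xvar f φ Φ t) (N t) x)
      (-(f x + deriv φ 0) - 1 / n * lapl Φ f x) 0 := by
  have hdiv := hasDerivAt_surfDiv_Xvar (hΦ.differentiableAt two_ne_zero)
    (hf.differentiableAt two_ne_zero) hφ hφ0 hΦpd hdet.ne' hN hN0
  rw [surfDiv_congr hN', surfDiv_neg, ← lapl_eq_surfDiv_gradV hΦ hf hdet] at hdiv
  refine (hdiv.const_mul (1 / (n : ℝ))).congr_deriv ?_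
  field_simp
  ring

end Variation

theorem first_variation_mean_curvature_sq_general {n : ℕ} (hn : 1 ≤ n) {U : Set (En n)}
    (hU : IsOpen U) {Φ : En n → En (n + 1)} {f : En n → ℝ} {φ : ℝ → ℝ} {ε : ℝ} (hε : 0 < ε)
    (hΦ : ContDiffOn ℝ 2 Φ U) (hf : ContDiffOn ℝ 2 f U) (hφ : DifferentiableAt ℝ φ 0)
    (hφ0 : φ 0 = 0) (hsph : ∀ x ∈ U, ‖Φ x‖ = 1) (himm : ∀ x ∈ U, (gmet Φ x).PosDef)
    {N : ℝ → En n → En (n + 1)}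
    (hNsm : ContDiffOn ℝ 2 (fun p : ℝ × En n => N p.1 p.2) (Ioo (-ε) ε ×ˢ U))
    (hNunit : ∀ t ∈ Ioo (-ε) ε, ∀ x ∈ U, ‖N t x‖ = 1)
    (hNorth : ∀ t ∈ Ioo (-ε) ε, ∀ x ∈ U, ∀ i : Fin n, ⟪N t x, pd i (Xvar f φ Φ t) x⟫ = 0)
    (hN0 : ∀ x ∈ U, N 0 x = Φ x) {x : En n} (hx : x ∈ U) :
    HasDerivAt (fun t => Hmean (Xvar f φ Φ t) (N t) x ^ 2)
      (-2 * (f x + deriv φ 0) - 2 / n * lapl Φ f x) 0 := by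
  have hn0 : n ≠ 0 := Nat.one_le_iff_ne_zero.1 hn
  have hI : Ioo (-ε) ε ∈ 𝓝 (0 : ℝ) := Ioo_mem_nhds (neg_lt_zero.2 hε) hε
  have hΦat {y} (hy : y ∈ U) := hΦ.contDiffAt (hU.mem_nhds hy)
  have hfat {y} (hy : y ∈ U) := hf.contDiffAt (hU.mem_nhds hy)
  have hNat {y} (hy : y ∈ U) := hNsm.contDiffAt (prod_mem_nhds hI (hU.mem_nhds hy))
  have hdet : 0 < (gmet Φ x).det := (himm x hx).det_pos
  have hΦpd (i : Fin n) : ⟪Φ x, pd i Φ x⟫ = 0 :=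
    inner_fderiv_eq_zero_of_norm_eq_one ((hΦat hx).differentiableAt two_ne_zero)
      (Filter.mem_of_superset (hU.mem_nhds hx) hsph) _
  have hN' {y : En n} (hy : y ∈ U) : deriv (fun t => N t y) 0 = -gradV Φ f y :=
    deriv_normal_eq_neg_gradV ((hΦat hy).differentiableAt two_ne_zero)
      ((hfat hy).differentiableAt two_ne_zero) hφ hφ0 (himm y hy)
      (hasDerivAt_curry_left ((hNat hy).differentiableAt two_ne_zero)).differentiableAt
      (Filter.mem_of_superset hI fun t ht => hNunit t ht y hy)
      (Filter.mem_of_superset hI fun t ht => hNorth t ht y hy) (hN0 y hy)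
  have hN0x : N 0 =ᶠ[𝓝 x] Φ := Filter.mem_of_superset (hU.mem_nhds hx) hN0
  have hH := hasDerivAt_Hmean_Xvar hn0 (hΦat hx) (hfat hx) hφ hφ0 hΦpd hdet (hNat hx)
    hN0x (Filter.mem_of_superset (hU.mem_nhds hx) fun y hy => hN' hy)
  have hH0 : Hmean (Xvar f φ Φ 0) (N 0) x = 1 := by
    rw [Xvar_zero hφ0, Hmean_eq_surfDiv, surfDiv_congr hN0x, ← Hmean_eq_surfDiv,
      Hmean_self hn0 hdet.ne']
  refine (hH.fun_pow 2).congr_deriv ?_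
  rw [hH0]
  ring

/-- `∂(H²)/∂t |_(t=0) = −2 (f + φ'(0)) − (2/n) Δf`. -/
theorem first_variation_mean_curvature_sq {n : ℕ} (hn : 1 ≤ n) (U : Set (En n)) (hU : IsOpen U)
    (Φ : En n → En (n + 1)) (f : En n → ℝ) (φ : ℝ → ℝ) (ε : ℝ) (hε : 0 < ε)
    (hΦ : ContDiffOn ℝ (⊤ : ℕ∞) Φ U) (hf : ContDiffOn ℝ (⊤ : ℕ∞) f U)
    (hφ : ContDiffOn ℝ (⊤ : ℕ∞) φ (Ioo (-ε) ε)) (hφ0 : φ 0 = 0)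
    (hsph : ∀ x ∈ U, ‖Φ x‖ = 1)
    (himm : ∀ x ∈ U, (gmet Φ x).PosDef)
    (N : ℝ → En n → En (n + 1))
    (hNsm : ContDiffOn ℝ (⊤ : ℕ∞) (fun p : ℝ × En n => N p.1 p.2) (Ioo (-ε) ε ×ˢ U))
    (hNunit : ∀ t ∈ Ioo (-ε) ε, ∀ x ∈ U, ‖N t x‖ = 1)
    (hNorth : ∀ t ∈ Ioo (-ε) ε, ∀ x ∈ U, ∀ i : Fin n, ⟪N t x, pd i (Xvar f φ Φ t) x⟫ = 0)
    (hN0 : ∀ x ∈ U, N 0 x = Φ x) :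
    ∀ x ∈ U,
      deriv (fun t => (Hmean (Xvar f φ Φ t) (N t) x) ^ 2) 0
        = -2 * (f x + deriv φ 0) - (2 / (n : ℝ)) * lapl Φ f x :=
  fun _ hx => HasDerivAt.deriv <| first_variation_mean_curvature_sq_general hn hU hε
    (hΦ.of_le (WithTop.coe_le_coe.2 le_top)) (hf.of_le (WithTop.coe_le_coe.2 le_top))
    ((hφ.contDiffAt (Ioo_mem_nhds (neg_lt_zero.2 hε) hε)).differentiableAt (by simp)) hφ0 hsph himm
    (hNsm.of_le (WithTop.coe_le_coe.2 le_top)) hNunit hNorth hN0 hx
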